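/- For every complex number q with 0 < |q| < 1, one has ∑_{i,j,k,l ≥ 0} q^{2i²+2j²+2k²+2l²−2il−2jl−2kl+2i−2j+l} / ((q⁴;q⁴)_i (q⁴;q⁴)_j (q⁴;q⁴)_k (q⁴;q⁴)_l) = 2 J_8 J_{10,24} / J_2² + 2q · J_4³ J_{4,24} / (J_2³ J_8) − 2q² · J_8 J_{2,24} / J_2². (This is the paper's identity F(q, q^{−1}, 1, q^{1/2}; q²) = 2 J_4 J_{5,12}/J_1² + 2q^{1/2} J_2³ J_{2,12}/(J_1³ J_4) − 2q J_4 J_{1,12}/J_1², with q replaced by q² throughout to clear half-integer exponents.) -/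

import Mathlib

open scoped BigOperators

/-- The infinite q-Pochhammer symbol `(a; q)_∞ = ∏_{k=0}^∞ (1 - a q^k)`. -/
noncomputable def qPochInf (a q : ℂ) : ℂ := ∏' n : ℕ, (1 - a * q ^ n)

/-- The finite q-Pochhammer symbol `(a; q)_n = ∏_{k=0}^{n-1} (1 - a q^k)`. -/
noncomputable def qPoch (a q : ℂ) (n : ℕ) : ℂ :=
  Finset.prod (Finset.range n) (fun k => 1 - a * q ^ k)

/-- `J_m = (q^m; q^m)_∞`. -/
noncomputable def J (q : ℂ) (m : ℕ) : ℂ := qPochInf (q ^ m) (q ^ m)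

/-- `J_{a,m} = (q^a; q^m)_∞ (q^{m-a}; q^m)_∞ (q^m; q^m)_∞`. -/
noncomputable def Jam (q : ℂ) (a m : ℕ) : ℂ :=
  qPochInf (q ^ a) (q ^ m) * qPochInf (q ^ (m - a)) (q ^ m) * qPochInf (q ^ m) (q ^ m)

open Filter Topology


lemma norm_sum_aux {p : ℂ} (hp : ‖p‖ < 1) (a : ℂ) : Summable (fun n : ℕ => ‖-(a * p ^ n)‖) := by
  simp only [norm_neg, norm_mul, norm_pow]
  exact (summable_geometric_of_lt_one (norm_nonneg _) hp).mul_left _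

lemma mulp {p : ℂ} (hp : ‖p‖ < 1) (a : ℂ) : Multipliable (fun n : ℕ => 1 - a * p ^ n) := by
  simpa [sub_eq_add_neg] using multipliable_one_add_of_summable (norm_sum_aux hp a)

lemma qPoch_tendsto {p : ℂ} (hp : ‖p‖ < 1) (a : ℂ) :
    Tendsto (fun n => qPoch a p n) atTop (𝓝 (qPochInf a p)) :=
  (mulp hp a).hasProd.tendsto_prod_nat

lemma qPochInf_ne {p : ℂ} (hp : ‖p‖ < 1) (a : ℂ) (h : ∀ n : ℕ, a * p ^ n ≠ 1) :
    qPochInf a p ≠ 0 := by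
  have := tprod_one_add_ne_zero_of_summable (f := fun n : ℕ => -(a * p ^ n))
    (fun i => by rw [← sub_eq_add_neg]; exact sub_ne_zero.mpr (h i).symm) (norm_sum_aux hp a)
  simpa [qPochInf, sub_eq_add_neg] using this

lemma qPochInf_ne' {p : ℂ} (hp : ‖p‖ < 1) (a : ℂ) (h : ‖a‖ < 1) :
    qPochInf a p ≠ 0 := by
  refine qPochInf_ne hp a fun n hn => ?_
  have h1 : ‖a * p ^ n‖ = 1 := by rw [hn]; simp
  rw [norm_mul, norm_pow] at h1
  have : ‖p‖ ^ n ≤ 1 := pow_le_one₀ (norm_nonneg _) hp.le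
  nlinarith [norm_nonneg a, norm_nonneg p]

lemma qPoch_ne {p : ℂ} (hp : ‖p‖ < 1) (a : ℂ) (h : ‖a‖ < 1) (n : ℕ) : qPoch a p n ≠ 0 := by
  unfold qPoch
  refine Finset.prod_ne_zero_iff.mpr fun k _ hk => ?_
  have h1 : ‖a * p ^ k‖ = 1 := by rw [← sub_eq_zero.mp hk]; simp
  rw [norm_mul, norm_pow] at h1
  have : ‖p‖ ^ k ≤ 1 := pow_le_one₀ (norm_nonneg _) hp.le
  nlinarith [norm_nonneg a, norm_nonneg p]

lemma qPoch_succ (a p : ℂ) (n : ℕ) : qPoch a p (n+1) = qPoch a p n * (1 - a * p ^ n) := by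
  simp [qPoch, Finset.prod_range_succ]

@[simp] lemma qPoch_zero (a p : ℂ) : qPoch a p 0 = 1 := by simp [qPoch]

lemma qPoch_add (a p : ℂ) (m n : ℕ) : qPoch a p (m+n) = qPoch a p m * qPoch (a * p ^ m) p n := by
  simp [qPoch, Finset.prod_range_add, pow_add, mul_assoc]

lemma qPochInf_split {p : ℂ} (hp : ‖p‖ < 1) (a : ℂ) (m : ℕ) :
    qPochInf a p = qPoch a p m * qPochInf (a * p ^ m) p := by
  have h1 := (qPoch_tendsto hp (a * p ^ m)).const_mul (qPoch a p m)
  have h2 := (qPoch_tendsto hp a).comp (tendsto_add_atTop_nat m)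
  refine tendsto_nhds_unique h2 (h1.congr fun n => ?_)
  simp [← qPoch_add, add_comm]

lemma qPochInf_succ {p : ℂ} (hp : ‖p‖ < 1) (a : ℂ) :
    qPochInf a p = (1 - a) * qPochInf (a * p) p := by
  simpa [qPoch] using qPochInf_split hp a 1

lemma qPoch_sub_one_le {p : ℂ} (hp : ‖p‖ < 1) (a : ℂ) (n : ℕ) :
    ‖qPoch a p n - 1‖ ≤ Real.exp (‖a‖ / (1 - ‖p‖)) - 1 := by
  have h := Finset.norm_prod_one_add_sub_one_le (Finset.range n) (fun k => -(a * p ^ k))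
  simp only [← sub_eq_add_neg] at h
  refine h.trans (sub_le_sub_right (Real.exp_le_exp.mpr ?_) _)
  refine ((norm_sum_aux hp a).sum_le_tsum _ (fun _ _ => norm_nonneg _)).trans ?_
  simp only [norm_neg, norm_mul, norm_pow]
  rw [tsum_mul_left, tsum_geometric_of_lt_one (norm_nonneg _) hp, div_eq_mul_inv]

lemma qPoch_le {p : ℂ} (hp : ‖p‖ < 1) (a : ℂ) (n : ℕ) :
    ‖qPoch a p n‖ ≤ Real.exp (‖a‖ / (1 - ‖p‖)) := by
  have := qPoch_sub_one_le hp a n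
  have h2 := norm_add_le (qPoch a p n - 1) 1
  simp at h2
  linarith

lemma qPochInf_sub_one_le {p : ℂ} (hp : ‖p‖ < 1) (a : ℂ) :
    ‖qPochInf a p - 1‖ ≤ Real.exp (‖a‖ / (1 - ‖p‖)) - 1 :=
  le_of_tendsto ((qPoch_tendsto hp a).sub_const 1).norm (Eventually.of_forall (qPoch_sub_one_le hp a))

lemma qPochInf_le {p : ℂ} (hp : ‖p‖ < 1) (a : ℂ) :
    ‖qPochInf a p‖ ≤ Real.exp (‖a‖ / (1 - ‖p‖)) :=
  le_of_tendsto (qPoch_tendsto hp a).norm (Eventually.of_forall (qPoch_le hp a))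

lemma qPochInf_tendsto_one {p : ℂ} (hp : ‖p‖ < 1) {u : ℕ → ℂ} (hu : Tendsto u atTop (𝓝 0)) :
    Tendsto (fun n => qPochInf (u n) p) atTop (𝓝 1) := by
  rw [tendsto_iff_norm_sub_tendsto_zero]
  refine squeeze_zero (fun _ => norm_nonneg _) (fun n => qPochInf_sub_one_le hp (u n)) ?_
  have h1 : Tendsto (fun n => ‖u n‖ / (1 - ‖p‖)) atTop (𝓝 (0 / (1 - ‖p‖))) := by
    simpa using (hu.norm.div_const (1 - ‖p‖))
  have := ((Real.continuous_exp.tendsto _).comp h1).sub_const 1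
  simpa using this

/-- inverse bound -/
lemma qPoch_inv_bdd {p : ℂ} (hp : ‖p‖ < 1) : ∃ C : ℝ, 0 < C ∧ ∀ n, ‖(qPoch p p n)⁻¹‖ ≤ C := by
  have h := ((qPoch_tendsto hp p).inv₀ (qPochInf_ne' hp p hp)).norm
  obtain ⟨C, hC⟩ := h.bddAbove_range
  exact ⟨max C 1, by positivity, fun n => (hC ⟨n, rfl⟩).trans (le_max_left _ _)⟩

lemma qPochInf_zero (p : ℂ) : qPochInf 0 p = 1 := by simp [qPochInf]

/-- super-geometric summability -/
lemma summ_sq {r : ℝ} (h0 : 0 < r) (h1 : r < 1) (x : ℝ) :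
    Summable (fun n : ℕ => r ^ ((n:ℤ)^2 - n) * x ^ n) := by
  by_cases hx : x = 0
  · subst hx
    refine summable_of_ne_finset_zero (s := {0}) fun b hb => ?_
    simp at hb
    simp [hb]
  refine summable_of_ratio_test_tendsto_lt_one (l := 0) one_pos
    (Eventually.of_forall fun n => by positivity) ?_
  have : ∀ n : ℕ, ‖r ^ (((n+1:ℕ):ℤ)^2 - (n+1:ℕ)) * x ^ (n+1)‖ / ‖r ^ ((n:ℤ)^2 - n) * x ^ n‖
      = (r^2) ^ n * |x| := by
    intro n
    have e : (((n+1:ℕ):ℤ)^2 - (n+1:ℕ)) = ((n:ℤ)^2 - n) + ((2*n:ℕ):ℤ) := by push_cast; ring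
    rw [e, zpow_add₀ h0.ne', zpow_natCast, pow_mul]
    simp only [norm_mul, norm_pow, Real.norm_eq_abs, abs_of_pos h0, norm_zpow]
    have : |x| ≠ 0 := by simpa using hx
    field_simp
    ring
  simp only [this]
  have := (tendsto_pow_atTop_nhds_zero_of_lt_one (sq_nonneg r) (by nlinarith : r^2 < 1)).mul_const |x|
  simpa using this

lemma summ_sqZ {w : ℂ} (h0 : 0 < ‖w‖) (h1 : ‖w‖ < 1) {z : ℂ} (hz : z ≠ 0) :
    Summable (fun n : ℤ => ‖w ^ (n^2 - n) * z ^ n‖) := by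
  simp only [norm_mul, norm_zpow]
  refine Summable.of_nat_of_neg_add_one ?_ ?_
  · simpa using summ_sq h0 h1 ‖z‖
  · have hz' : 0 < ‖z‖ := by simpa using hz
    refine ((summ_sq h0 h1 (‖w‖^4 * ‖z‖⁻¹)).mul_left (‖w‖^2 * ‖z‖⁻¹)).congr fun n => ?_
    rw [show (-((n:ℤ)+1))^2 - -((n:ℤ)+1) = ((n:ℤ)^2 - n) + ((4 * n + 2 : ℕ):ℤ) by push_cast; ring,
      zpow_add₀ h0.ne', zpow_natCast, zpow_neg, zpow_add₀ hz'.ne', mul_pow, pow_add, pow_mul]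
    simp
    ring


noncomputable def tt (w A B : ℂ) (j : ℕ) : ℂ :=
  qPoch A (w^2) j * qPochInf (A * B * (w^2)^j) (w^2) * (w ^ ((j:ℤ)^2 - j) * (-B) ^ j)
    * (qPoch (w^2) (w^2) j)⁻¹

lemma sq_lt {w : ℂ} (h1 : ‖w‖ < 1) : ‖w^2‖ < 1 := by
  rw [norm_pow]; nlinarith [norm_nonneg w]

lemma tt_bound {w : ℂ} (h1 : ‖w‖ < 1) (A B : ℂ) : ∃ C : ℝ, 0 < C ∧ ∀ B' : ℂ, ‖B'‖ ≤ ‖B‖ → ∀ j,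
    ‖tt w A B' j‖ ≤ C * (‖w‖ ^ ((j:ℤ)^2 - j) * ‖B‖ ^ j) := by
  have hp := sq_lt h1
  obtain ⟨C, hC, hb⟩ := qPoch_inv_bdd hp
  have h1p : 0 < 1 - ‖w^2‖ := by linarith
  refine ⟨Real.exp (‖A‖ / (1 - ‖w^2‖)) * Real.exp (‖A‖ * ‖B‖ / (1 - ‖w^2‖)) * C, by positivity,
    fun B' hB j => ?_⟩
  have e1 := qPoch_le hp A j
  have e2 := qPochInf_le hp (A * B' * (w^2)^j)
  have e3 : ‖A * B' * (w^2)^j‖ ≤ ‖A‖ * ‖B‖ := by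
    rw [norm_mul, norm_mul, norm_pow]
    have : ‖w^2‖ ^ j ≤ 1 := pow_le_one₀ (norm_nonneg _) hp.le
    calc ‖A‖ * ‖B'‖ * ‖w^2‖ ^ j ≤ ‖A‖ * ‖B'‖ * 1 := by gcongr
      _ ≤ _ := by rw [mul_one]; gcongr
  have e4 : ‖qPochInf (A * B' * (w^2)^j) (w^2)‖ ≤ Real.exp (‖A‖ * ‖B‖ / (1 - ‖w^2‖)) :=
    e2.trans (Real.exp_le_exp.mpr (by gcongr))
  have e5 : ‖w ^ ((j:ℤ)^2 - j) * (-B') ^ j‖ ≤ ‖w‖ ^ ((j:ℤ)^2 - j) * ‖B‖ ^ j := by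
    rw [norm_mul, norm_zpow, norm_pow, norm_neg]; gcongr
  unfold tt
  rw [norm_mul, norm_mul, norm_mul]
  calc _ ≤ Real.exp (‖A‖ / (1 - ‖w^2‖)) * Real.exp (‖A‖ * ‖B‖ / (1 - ‖w^2‖)) *
        (‖w‖ ^ ((j:ℤ)^2 - j) * ‖B‖ ^ j) * C := by
        gcongr
        exact hb j
    _ = _ := by ring

lemma tt_summable {w : ℂ} (h0 : 0 < ‖w‖) (h1 : ‖w‖ < 1) (A B : ℂ) :
    Summable (fun j => ‖tt w A B j‖) := by
  obtain ⟨C, _, h⟩ := tt_bound h1 A B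
  exact Summable.of_nonneg_of_le (fun _ => norm_nonneg _) (h B le_rfl)
    ((summ_sq h0 h1 ‖B‖).mul_left C)

lemma tt_step {w : ℂ} (h0 : 0 < ‖w‖) (h1 : ‖w‖ < 1) (A B : ℂ) (j : ℕ) :
    tt w A B j - (1 - B) * tt w A (B * w^2) j =
      (1 - (w^2)^j) * tt w A B j - (1 - (w^2)^(j+1)) * tt w A B (j+1) := by
  have hp := sq_lt h1
  have hw : w ≠ 0 := by simpa using h0
  have hn := qPoch_ne hp (w^2) hp j
  have hn1 := qPoch_ne hp (w^2) hp (j+1)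
  unfold tt
  rw [qPochInf_succ hp (A * B * (w^2)^j)]
  rw [show A * (B * w^2) * (w^2)^j = A * B * (w^2)^j * w^2 by ring,
    show A * B * (w^2)^(j+1) = A * B * (w^2)^j * w^2 by ring]
  rw [qPoch_succ] at hn1
  have hn2 := right_ne_zero_of_mul hn1
  rw [qPoch_succ A, qPoch_succ (w^2)]
  rw [show ((j+1:ℕ):ℤ)^2 - ((j+1:ℕ):ℤ) = ((j:ℤ)^2 - j) + ((2*j:ℕ):ℤ) by push_cast; ring,
    zpow_add₀ hw, zpow_natCast, pow_mul]
  generalize w ^ ((j:ℤ)^2 - j) = W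
  rw [show (-(B * w^2))^j = (-B)^j * (w^2)^j by rw [← mul_pow]; ring, pow_succ (-B)]
  rw [pow_succ' (w^2) j, mul_inv]
  generalize qPochInf (A * B * (w^2)^j * w^2) (w^2) = X
  generalize (-B)^j = Y
  generalize (w^2)^j = Z at *
  generalize w^2 = p at *
  have : (1 - p * Z) * (1 - p * Z)⁻¹ = 1 := mul_inv_cancel₀ hn2
  generalize (1 - p * Z)⁻¹ = I at *
  linear_combination (qPoch A p j * (1 - A * Z) * X * (W * Z * (Y * -B)) * (qPoch p p j)⁻¹) * this

lemma tt_rec {w : ℂ} (h0 : 0 < ‖w‖) (h1 : ‖w‖ < 1) (A B : ℂ) :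
    ∑' j, tt w A B j = (1 - B) * ∑' j, tt w A (B * w^2) j := by
  have s1 := (tt_summable h0 h1 A B).of_norm
  have s2 := (tt_summable h0 h1 A (B * w^2)).of_norm
  have hp := sq_lt h1
  have h := (s1.hasSum.sub (s2.hasSum.mul_left (1 - B))).tendsto_sum_nat
  have e : ∀ n, ∑ j ∈ Finset.range n, (tt w A B j - (1 - B) * tt w A (B * w^2) j)
      = - ((1 - (w^2)^n) * tt w A B n) := by
    intro n
    rw [Finset.sum_congr rfl fun j _ => tt_step h0 h1 A B j]
    rw [Finset.sum_range_sub' (fun j => (1 - (w^2)^j) * tt w A B j)]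
    simp
  simp only [e] at h
  have h2 : Tendsto (fun n => -((1 - (w^2)^n) * tt w A B n)) atTop (𝓝 (-((1 - 0) * 0))) :=
    (((tendsto_pow_atTop_nhds_zero_of_norm_lt_one hp).const_sub 1).mul
      s1.tendsto_atTop_zero).neg
  have := tendsto_nhds_unique h h2
  simp at this
  exact sub_eq_zero.mp this

/-- 1φ1 summation -/
lemma phi11 {w : ℂ} (h0 : 0 < ‖w‖) (h1 : ‖w‖ < 1) (A B : ℂ) :
    ∑' j, tt w A B j = qPochInf B (w^2) := by
  have hp := sq_lt h1
  have key : ∀ n : ℕ, ∑' j, tt w A B j = qPoch B (w^2) n * ∑' j, tt w A (B * (w^2)^n) j := by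
    intro n
    induction n with
    | zero => simp
    | succ n ih => rw [ih, tt_rec h0 h1 A (B * (w^2)^n), qPoch_succ, pow_succ (w^2) n]; simp only [mul_assoc]
  have lim : Tendsto (fun n : ℕ => ∑' j, tt w A (B * (w^2)^n) j) atTop
      (𝓝 (∑' j : ℕ, if j = 0 then 1 else 0)) := by
    obtain ⟨C, hC, hb⟩ := tt_bound h1 A B
    refine tendsto_tsum_of_dominated_convergence
      ((summ_sq h0 h1 ‖B‖).mul_left C) (fun j => ?_) (Eventually.of_forall fun n j => ?_)
    · have hBn : Tendsto (fun n : ℕ => B * (w^2)^n) atTop (𝓝 0) := by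
        simpa using (tendsto_pow_atTop_nhds_zero_of_norm_lt_one hp).const_mul B
      have hq : Tendsto (fun n : ℕ => qPochInf (A * (B * (w^2)^n) * (w^2)^j) (w^2)) atTop (𝓝 1) :=
        qPochInf_tendsto_one hp (by simpa using (hBn.const_mul A).mul_const ((w^2)^j))
      unfold tt
      have := ((hq.const_mul (qPoch A (w^2) j)).mul (((hBn.neg).pow j).const_mul
        (w ^ ((j:ℤ)^2 - j)))).mul_const (qPoch (w^2) (w^2) j)⁻¹
      convert this using 2
      rcases j with _ | j <;> simp
    · refine hb _ ?_ j
      rw [norm_mul, norm_pow]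
      exact mul_le_of_le_one_right (norm_nonneg _) (pow_le_one₀ (norm_nonneg _) hp.le)
  have h3 := (qPoch_tendsto hp B).mul lim
  simp only [← key, tsum_ite_eq, mul_one] at h3
  exact tendsto_nhds_unique tendsto_const_nhds h3

noncomputable def ee (w z : ℂ) (j : ℕ) : ℂ :=
  w ^ ((j:ℤ)^2 - j) * z ^ j * (qPoch (w^2) (w^2) j)⁻¹

lemma tt_zero (w z : ℂ) (j : ℕ) : tt w 0 (-z) j = ee w z j := by
  simp [tt, ee, qPochInf_zero, qPoch]

lemma euler1_summable {w : ℂ} (h0 : 0 < ‖w‖) (h1 : ‖w‖ < 1) (z : ℂ) :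
    Summable (fun j => ‖ee w z j‖) := by
  simpa only [tt_zero] using tt_summable h0 h1 0 (-z)

lemma euler1 {w : ℂ} (h0 : 0 < ‖w‖) (h1 : ‖w‖ < 1) (z : ℂ) :
    ∑' j, ee w z j = qPochInf (-z) (w^2) := by
  simpa only [tt_zero] using phi11 h0 h1 0 (-z)

lemma euler2_summable {p : ℂ} (hp : ‖p‖ < 1) {z : ℂ} (hz : ‖z‖ < 1) :
    Summable (fun j => ‖z ^ j * (qPoch p p j)⁻¹‖) := by
  obtain ⟨C, hC, hb⟩ := qPoch_inv_bdd hp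
  refine Summable.of_nonneg_of_le (fun _ => norm_nonneg _) (fun j => ?_)
    ((summable_geometric_of_lt_one (norm_nonneg _) hz).mul_right C)
  rw [norm_mul, norm_pow]
  gcongr
  exact hb j

lemma euler2_rec {p : ℂ} (hp : ‖p‖ < 1) {z : ℂ} (hz : ‖z‖ < 1) :
    (1 - z) * ∑' j, z ^ j * (qPoch p p j)⁻¹ = ∑' j, (z * p) ^ j * (qPoch p p j)⁻¹ := by
  have hzp : ‖z * p‖ < 1 := by
    rw [norm_mul]; nlinarith [norm_nonneg z, norm_nonneg p]
  have s1 := (euler2_summable hp hz).of_norm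
  have s2 := (euler2_summable hp hzp).of_norm
  have e : ∑' j, (z ^ j * (qPoch p p j)⁻¹ - (z * p) ^ j * (qPoch p p j)⁻¹)
     = z * ∑' j, z ^ j * (qPoch p p j)⁻¹ := by
    rw [(s1.sub s2).tsum_eq_zero_add, ← tsum_mul_left]
    simp only [pow_zero, sub_self, zero_add]
    refine tsum_congr fun j => ?_
    have hn1 := qPoch_ne hp p hp (j+1)
    rw [qPoch_succ] at *
    have h2 := right_ne_zero_of_mul hn1
    have h3 := left_ne_zero_of_mul hn1
    rw [mul_pow, mul_inv]
    have : (1 - p * p^j) * (1 - p * p^j)⁻¹ = 1 := mul_inv_cancel₀ h2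
    generalize (1 - p * p^j)⁻¹ = I at *
    linear_combination (z * z^j * (qPoch p p j)⁻¹) * this
  rw [s1.tsum_sub s2] at e
  linear_combination e

lemma euler2 {p : ℂ} (hp : ‖p‖ < 1) {z : ℂ} (hz : ‖z‖ < 1) :
    qPochInf z p * ∑' j, z ^ j * (qPoch p p j)⁻¹ = 1 := by
  have hzn : ∀ n : ℕ, ‖z * p ^ n‖ ≤ ‖z‖ := fun n => by
    rw [norm_mul, norm_pow]
    exact mul_le_of_le_one_right (norm_nonneg _) (pow_le_one₀ (norm_nonneg _) hp.le)
  have key : ∀ n : ℕ, qPoch z p n * ∑' j, z ^ j * (qPoch p p j)⁻¹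
      = ∑' j, (z * p^n) ^ j * (qPoch p p j)⁻¹ := by
    intro n
    induction n with
    | zero => simp
    | succ n ih =>
      rw [pow_succ, ← mul_assoc, ← euler2_rec hp ((hzn n).trans_lt hz), ← ih, qPoch_succ]; ring
  have lim : Tendsto (fun n : ℕ => ∑' j, (z * p^n) ^ j * (qPoch p p j)⁻¹) atTop
      (𝓝 (∑' j : ℕ, if j = 0 then 1 else 0)) := by
    obtain ⟨C, hC, hb⟩ := qPoch_inv_bdd hp
    refine tendsto_tsum_of_dominated_convergence
      ((summable_geometric_of_lt_one (norm_nonneg _) hz).mul_right C) (fun j => ?_)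
        (Eventually.of_forall fun n j => ?_)
    · have hBn : Tendsto (fun n : ℕ => z * p^n) atTop (𝓝 0) := by
        simpa using (tendsto_pow_atTop_nhds_zero_of_norm_lt_one hp).const_mul z
      convert (hBn.pow j).mul_const (qPoch p p j)⁻¹ using 2
      rcases j with _ | j <;> simp
    · rw [norm_mul, norm_pow]
      gcongr
      · exact hzn n
      · exact hb j
  have h3 := (qPoch_tendsto hp z).mul_const (∑' j, z ^ j * (qPoch p p j)⁻¹)
  simp only [key] at h3
  simp only [tsum_ite_eq] at lim
  exact tendsto_nhds_unique h3 lim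


lemma qPochInf_neg_zero {w : ℂ} (h0 : 0 < ‖w‖) (h1 : ‖w‖ < 1) (k : ℕ) :
    qPochInf (w ^ (-2*(k:ℤ))) (w^2) = 0 := by
  have hw : w ≠ 0 := by simpa using h0
  rw [qPochInf_split (sq_lt h1) _ (k+1), qPoch_succ]
  have : w ^ (-2*(k:ℤ)) * (w^2)^k = 1 := by
    rw [← pow_mul, ← zpow_natCast, ← zpow_add₀ hw]
    simp
  rw [this]; simp

lemma jtp {w : ℂ} (h0 : 0 < ‖w‖) (h1 : ‖w‖ < 1) {z : ℂ} (hz : z ≠ 0) (hz1 : ‖w^2‖ < ‖z‖) :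
    ∑' n : ℤ, w ^ (n^2 - n) * (-z) ^ n
      = qPochInf z (w^2) * qPochInf (w^2 / z) (w^2) * qPochInf (w^2) (w^2) := by
  have hw : w ≠ 0 := by simpa using h0
  have hp := sq_lt h1
  have hz' : 0 < ‖z‖ := by simpa using hz
  have hpz : ‖w^2 / z‖ < 1 := by rw [norm_div, div_lt_one hz']; exact hz1
  have hnz : -z ≠ 0 := neg_ne_zero.mpr hz
  have sa := summ_sqZ h0 h1 hnz
  have sb := euler2_summable hp hpz
  have hprod := tsum_mul_tsum_of_summable_norm sa sb
  have hs := summable_mul_of_summable_norm sa sb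
  let e : ℤ × ℕ ≃ ℤ × ℕ :=
    { toFun := fun x => (x.1 + x.2, x.2)
      invFun := fun x => (x.1 - x.2, x.2)
      left_inv := fun x => by simp
      right_inv := fun x => by simp }
  have hs2 := e.summable_iff.mpr hs
  rw [← e.tsum_eq] at hprod
  have ht : ∀ n : ℤ, ∀ m : ℕ, (w ^ ((n+m)^2 - (n+m)) * (-z) ^ (n+m)) *
      ((w^2/z)^m * (qPoch (w^2) (w^2) m)⁻¹)
      = (w ^ (n^2 - n) * (-z)^n) * ee w (-(w ^ (2*n+2))) m := by
    intro n m
    unfold ee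
    rw [show (n+m)^2 - (n+m) = (n^2-n) + ((m:ℤ)^2-m) + 2 * n * m by ring, zpow_add₀ hw,
      zpow_add₀ hw, zpow_add₀ hnz, zpow_natCast, zpow_add₀ hw, zpow_mul w (2*n) m, zpow_natCast]
    have : (-z)^m * (w^2/z)^m = (-(w^2))^m := by
      rw [← mul_pow]; congr 1; field_simp
    have h3 : (-(w ^ (2*n) * w ^ (2:ℤ)))^m = (w^(2*n))^m * (-(w^2))^m := by
      rw [← mul_pow]; congr 1; rw [← zpow_natCast w 2]; simp
    rw [h3, ← this]
    ring
  have hs3 : Summable (fun x : ℤ × ℕ => (w ^ (x.1^2 - x.1) * (-z)^x.1) * ee w (-(w ^ (2*x.1+2))) x.2) := by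
    refine hs2.congr fun x => ?_
    rw [← ht]; rfl
  have hin : ∀ n : ℤ, ∑' m, (w ^ (n^2 - n) * (-z)^n) * ee w (-(w ^ (2*n+2))) m
      = (w ^ (n^2 - n) * (-z)^n) * qPochInf (w ^ (2*n+2)) (w^2) := by
    intro n
    rw [tsum_mul_left, euler1 h0 h1, neg_neg]
  have hR : ∑' x : ℤ × ℕ, (w ^ (x.1^2 - x.1) * (-z)^x.1) * ee w (-(w ^ (2*x.1+2))) x.2
      = qPochInf z (w^2) * qPochInf (w^2) (w^2) := by
    have hsn := hs3.prod
    rw [hs3.tsum_prod]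
    simp only [hin] at hsn ⊢
    have hz0 : ∀ k : ℕ, (w ^ ((-((k:ℤ)+1))^2 - (-((k:ℤ)+1))) * (-z)^(-((k:ℤ)+1)))
        * qPochInf (w ^ (2*(-((k:ℤ)+1))+2)) (w^2) = 0 := by
      intro k
      rw [show 2*(-((k:ℤ)+1))+2 = -2*(k:ℤ) by ring, qPochInf_neg_zero h0 h1, mul_zero]
    have hsN : Summable (fun n : ℕ => (w ^ ((n:ℤ)^2 - (n:ℤ)) * (-z)^(n:ℤ)) * qPochInf (w ^ (2*(n:ℤ)+2)) (w^2)) :=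
      hsn.comp_injective (i := fun n : ℕ => (n:ℤ)) (fun a b h => Int.ofNat_inj.mp h)
    rw [tsum_of_nat_of_neg_add_one (f := fun n : ℤ => (w ^ (n^2 - n) * (-z)^n) * qPochInf (w ^ (2*n+2)) (w^2)) hsN
      (by simp only [hz0]; exact summable_zero)]
    simp only [hz0, tsum_zero, add_zero]
    have : ∀ n : ℕ, w ^ ((n:ℤ)^2 - n) * (-z)^(n:ℤ) * qPochInf (w ^ (2*(n:ℤ)+2)) (w^2)
        = ee w (-z) n * qPochInf (w^2) (w^2) := by
      intro n
      rw [qPochInf_split hp (w^2) n]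
      have hn := qPoch_ne hp (w^2) hp n
      have h5 : w ^ (2*(n:ℤ)+2) = w^2 * (w^2)^n := by
        rw [← pow_succ', ← pow_mul, ← zpow_natCast w (2*(n+1))]; congr 1
      rw [h5]
      unfold ee
      rw [zpow_natCast]
      field_simp
    simp only [this]
    rw [tsum_mul_right, euler1 h0 h1, neg_neg]
  have hL : ∑' x, (fun x : ℤ × ℕ => (w ^ (x.1^2 - x.1) * (-z) ^ x.1) * ((w^2/z)^x.2 * (qPoch (w^2) (w^2) x.2)⁻¹)) (e x)
     = qPochInf z (w^2) * qPochInf (w^2) (w^2) := by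
    rw [← hR]
    refine tsum_congr fun x => ?_
    rw [← ht]; rfl
  rw [hL] at hprod
  have h2 := euler2 hp hpz
  linear_combination (qPochInf (w^2/z) (w^2)) * hprod -
    (∑' n : ℤ, w ^ (n^2 - n) * (-z) ^ n) * h2


noncomputable def DD (p : ℂ) (k r : ℕ) : ℂ :=
  (-1)^r * p^(r^2) * (1 - p^(2*r+1)) * (qPoch p p (k-r))⁻¹ * (qPoch p p (k+r+1))⁻¹

lemma DD_tel {p : ℂ} (hp : ‖p‖ < 1) (k n : ℕ) (hn : n ≤ k+1) :
    ∑ r ∈ Finset.range n, ((1 - p^(2*(k+1))) * DD p (k+1) r - DD p k r)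
      = -((-1)^n * p^(n^2) * p^(k+1-n) * (1 - p^(2*n)) * (qPoch p p (k+1-n))⁻¹
          * (qPoch p p (k+1+n))⁻¹) := by
  induction n with
  | zero => simp
  | succ n ih =>
    rw [Finset.sum_range_succ, ih (by omega)]
    obtain ⟨d, rfl⟩ : ∃ d, k = n + d := ⟨k - n, by omega⟩
    unfold DD
    rw [show n + d + 1 - n = d + 1 by omega, show n + d - n = d by omega,
      show n + d + 1 - (n+1) = d by omega, show n + d + 1 + (n+1) = (2*n+d+1) + 1 by omega,
      show n + d + 1 + n + 1 = (2*n+d+1)+1 by omega, show n + d + 1 + n = 2*n+d+1 by omega,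
      show n + d + n + 1 = 2*n+d+1 by omega]
    have a1 := qPoch_ne hp p hp (d+1)
    have a2 := qPoch_ne hp p hp (2*n+d+1+1)
    rw [qPoch_succ p p (2*n+d+1)] at *
    rw [qPoch_succ p p d] at *
    have b1 := right_ne_zero_of_mul a1
    have b2 := right_ne_zero_of_mul a2
    have c1 := left_ne_zero_of_mul a1
    have c2 := left_ne_zero_of_mul a2
    generalize qPoch p p d = X at *
    generalize qPoch p p (2*n+d+1) = Y at *
    field_simp
    ring

lemma DD_sum {p : ℂ} (hp : ‖p‖ < 1) (k : ℕ) :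
    ∑ r ∈ Finset.range (k+1), DD p k r = (qPoch (p^2) (p^2) k)⁻¹ := by
  have hp2 := sq_lt hp
  induction k with
  | zero =>
    have := qPoch_ne hp p hp 1
    simp [DD, qPoch] at *
    field_simp
  | succ k ih =>
    have h := DD_tel hp k (k+1) le_rfl
    rw [Finset.sum_sub_distrib, ← Finset.mul_sum, ih] at h
    rw [Finset.sum_range_succ]
    have hl : (1 - p^(2*(k+1))) * DD p (k+1) (k+1) = ((-1)^(k+1) * p^((k+1)^2) * p^(k+1-(k+1)) * (1 - p^(2*(k+1))) * (qPoch p p (k+1-(k+1)))⁻¹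
          * (qPoch p p (k+1+(k+1)))⁻¹) := by
      unfold DD
      have a2 := qPoch_ne hp p hp (k+1+(k+1)+1)
      rw [qPoch_succ] at a2 ⊢
      have b2 := right_ne_zero_of_mul a2
      have c2 := left_ne_zero_of_mul a2
      have b3 : 1 - p * p^(k+1+(k+1)) = 1 - p^(2*(k+1)+1) := by ring
      rw [b3] at b2 ⊢
      simp only [Nat.sub_self, qPoch_zero]
      field_simp
    have a3 := qPoch_ne hp2 (p^2) hp2 (k+1)
    rw [qPoch_succ] at a3 ⊢
    have b3 := right_ne_zero_of_mul a3
    rw [show p^2 * (p^2)^k = p^(2*(k+1)) by rw [← pow_succ', ← pow_mul]] at *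
    rw [mul_inv, eq_mul_inv_iff_mul_eq₀ b3]
    linear_combination h + hl

noncomputable def uu (q : ℂ) (r j : ℕ) : ℂ :=
  DD (q^2) (r+j) r * (q^((r+j)^2+2*(r+j)) * qPoch (-q) (q^2) (r+j))

lemma uu_summable {q : ℂ} (h1 : ‖q‖ < 1) :
    Summable (fun x : ℕ × ℕ => uu q x.1 x.2) := by
  have hp := sq_lt h1
  obtain ⟨C, hC, hb⟩ := qPoch_inv_bdd hp
  have hg := (summable_geometric_of_lt_one (norm_nonneg _) h1)
  have hgg := (hg.mul_of_nonneg hg (fun _ => by positivity) (fun _ => by positivity)).mul_left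
    (2 * C * C * Real.exp (‖-q‖/(1-‖q^2‖)))
  refine Summable.of_norm_bounded hgg fun ⟨r, j⟩ => ?_
  have e1 := qPoch_le hp (-q) (r+j)
  have e2 : ‖1 - (q^2)^(2*r+1)‖ ≤ 2 := by
    refine (norm_sub_le _ _).trans ?_
    rw [norm_pow, norm_one]
    have : ‖q^2‖ ^ (2*r+1) ≤ 1 := pow_le_one₀ (norm_nonneg _) hp.le
    linarith
  have e3 : ‖q‖ ^ ((r+j)^2+2*(r+j)) ≤ ‖q‖^r * ‖q‖^j := by
    rw [← pow_add]
    exact pow_le_pow_of_le_one (norm_nonneg _) h1.le (by nlinarith)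
  have e4 : ‖q^2‖ ^ (r^2) ≤ 1 := pow_le_one₀ (norm_nonneg _) hp.le
  unfold uu DD
  simp only [norm_mul, norm_pow, norm_neg, norm_one, one_pow, one_mul] at *
  calc _ ≤ 1 * 2 * C * C * ((‖q‖^r * ‖q‖^j) * Real.exp (‖q‖/(1-‖q‖^2))) := by
        gcongr
        · exact hb _
        · exact hb _
    _ = _ := by ring

lemma uu_antidiag {q : ℂ} (h1 : ‖q‖ < 1) (k : ℕ) :
    ∑ x ∈ Finset.HasAntidiagonal.antidiagonal k, uu q x.1 x.2
      = q^(k^2+2*k) * qPoch (-q) (q^2) k * (qPoch (q^4) (q^4) k)⁻¹ := by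
  rw [Finset.Nat.sum_antidiagonal_eq_sum_range_succ (fun r j => uu q r j)]
  have := DD_sum (sq_lt h1) k
  rw [show (q^2)^2 = q^4 by ring] at this
  rw [← this, Finset.mul_sum]
  refine Finset.sum_congr rfl fun r hr => ?_
  have hr' : r + (k - r) = k := by have := Finset.mem_range.mp hr; omega
  simp only [uu, hr']
  ring

lemma uu_inner {q : ℂ} (h0 : 0 < ‖q‖) (h1 : ‖q‖ < 1) (r : ℕ) :
    ∑' j, uu q r j = qPochInf (-q) (q^2) * (qPochInf (q^2) (q^2))⁻¹ *
      ((-1)^r * q^(3*r^2+2*r) * (1 - q^(2*r+1))) := by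
  have hp := sq_lt h1
  have hq : q ≠ 0 := by simpa using h0
  have hI := qPochInf_ne' hp (q^2) hp
  have ht : ∀ j, uu q r j = ((-1)^r * (q^2)^(r^2) * (1 - (q^2)^(2*r+1)) * q^(r^2+2*r) *
      qPoch (-q) (q^2) r * (qPochInf (q^2) (q^2))⁻¹) * tt q (-q^(2*r+1)) (-q^(2*r+3)) j := by
    intro j
    unfold uu DD tt
    rw [qPoch_add (-q), show r + j - r = j by omega]
    have e1 := qPochInf_split hp (q^2) (r+j+r+1)
    have n1 := qPoch_ne hp (q^2) hp (r+j+r+1)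
    have n2 := qPoch_ne hp (q^2) hp j
    rw [show -q^(2*r+1) * -q^(2*r+3) * (q^2)^j = q^2 * (q^2)^(r+j+r+1) by ring]
    rw [show -q * (q^2)^r = -q^(2*r+1) by ring]
    have e2 : q^((r+j)^2+2*(r+j)) = q^(r^2+2*r) * (q ^ ((j:ℤ)^2 - j) * (- -q^(2*r+3))^j) := by
      rw [neg_neg]
      simp only [← zpow_natCast, ← zpow_mul, ← zpow_add₀ hq]
      congr 1
      push_cast
      ring
    rw [e2]
    have e3 : (qPoch (q^2) (q^2) (r+j+r+1))⁻¹ = (qPochInf (q^2) (q^2))⁻¹ * qPochInf (q^2 * (q^2)^(r+j+r+1)) (q^2) := by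
      rw [e1] at hI ⊢
      have := right_ne_zero_of_mul hI
      field_simp
    rw [e3]
    ring
  simp only [ht]
  rw [tsum_mul_left, phi11 h0 h1]
  have e4 := qPochInf_split hp (-q) (r+1)
  rw [qPoch_succ, show -q * (q^2)^(r+1) = -q^(2*r+3) by ring, show -q * (q^2)^r = -q^(2*r+1) by ring] at e4
  rw [e4]
  ring

lemma bailey {q : ℂ} (h0 : 0 < ‖q‖) (h1 : ‖q‖ < 1) :
    ∑' k : ℕ, q^(k^2+2*k) * qPoch (-q) (q^2) k * (qPoch (q^4) (q^4) k)⁻¹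
      = qPochInf (-q) (q^2) * (qPochInf (q^2) (q^2))⁻¹ *
        ∑' n : ℤ, (-1)^n * q^(3*n^2+2*n) := by
  have hq : q ≠ 0 := by simpa using h0
  have hs := uu_summable h1
  have hA : ∑' x : ℕ × ℕ, uu q x.1 x.2 = ∑' k : ℕ, q^(k^2+2*k) * qPoch (-q) (q^2) k * (qPoch (q^4) (q^4) k)⁻¹ := by
    rw [← Finset.HasAntidiagonal.sigmaAntidiagonalEquivProd.tsum_eq (fun x : ℕ × ℕ => uu q x.1 x.2)]
    have hs' := Finset.HasAntidiagonal.sigmaAntidiagonalEquivProd.summable_iff.mpr hs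
    refine (Summable.tsum_sigma' (fun n => (hasSum_fintype _).summable) hs').trans ?_
    refine tsum_congr fun k => ?_
    rw [← uu_antidiag h1, tsum_fintype]
    exact Finset.sum_coe_sort (Finset.HasAntidiagonal.antidiagonal k) (fun x : ℕ × ℕ => uu q x.1 x.2)
  rw [← hA, hs.tsum_prod]
  simp only [uu_inner h0 h1]
  rw [tsum_mul_left]
  congr 1
  have hsum : Summable (fun n : ℤ => (-1)^n * q^(3*n^2+2*n)) := by
    have := summ_sqZ (w := q^3) (z := -q^5) (by rw [norm_pow]; positivity) (by rw [norm_pow]; exact pow_lt_one₀ (norm_nonneg _) h1 (by norm_num)) (by simpa using hq)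
    refine this.of_norm.congr fun n => ?_
    rw [neg_eq_neg_one_mul, mul_zpow]
    simp only [← zpow_natCast, ← zpow_mul]
    rw [mul_left_comm, ← zpow_add₀ hq]
    congr 2
    push_cast; ring
  have s1 : Summable (fun n : ℕ => (-1:ℂ)^(n:ℤ) * q^(3*(n:ℤ)^2+2*n)) :=
    hsum.comp_injective (i := fun n : ℕ => (n:ℤ)) (fun a b h => Int.ofNat_inj.mp h)
  have s2 : Summable (fun n : ℕ => (-1:ℂ)^(-((n:ℤ)+1)) * q^(3*(-((n:ℤ)+1))^2+2*(-((n:ℤ)+1)))) :=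
    hsum.comp_injective (i := fun n : ℕ => (-((n:ℤ)+1))) (fun a b h => by simpa using h)
  rw [tsum_of_nat_of_neg_add_one (f := fun n : ℤ => (-1)^n * q^(3*n^2+2*n)) s1 s2, ← s1.tsum_add s2]
  refine tsum_congr fun n => ?_
  have e1 : (-1:ℂ)^(-((n:ℤ)+1)) = -(-1)^n := by
    rw [zpow_neg, ← inv_zpow, inv_neg_one, zpow_add₀ (by norm_num)]; simp
  have e2 : q^(3*(-((n:ℤ)+1))^2+2*(-((n:ℤ)+1))) = q^(3*n^2+2*n) * q^(2*n+1) := by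
    simp only [← zpow_natCast, ← zpow_add₀ hq]
    congr 1; push_cast; ring
  have e3 : q^(3*(n:ℤ)^2+2*n) = q^(3*n^2+2*n) := by
    rw [← zpow_natCast]; congr 1
  rw [e1, e2, e3, zpow_natCast]
  ring


lemma qPoch_two (a p : ℂ) (n : ℕ) :
    qPoch a p (2*n) = qPoch a (p^2) n * qPoch (a*p) (p^2) n := by
  induction n with
  | zero => simp
  | succ n ih =>
    rw [show 2*(n+1) = 2*n+1+1 by ring, qPoch_succ, qPoch_succ, qPoch_succ, qPoch_succ, ih]
    ring

lemma qPochInf_two {p : ℂ} (hp : ‖p‖ < 1) (a : ℂ) :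
    qPochInf a p = qPochInf a (p^2) * qPochInf (a*p) (p^2) := by
  have hp2 := sq_lt hp
  have h1 := (qPoch_tendsto hp2 a).mul (qPoch_tendsto hp2 (a*p))
  simp only [← qPoch_two] at h1
  have h2 := (qPoch_tendsto hp a).comp (tendsto_id.const_mul_atTop' (r := 2) (by norm_num))
  exact tendsto_nhds_unique h2 h1

lemma qPoch_sq (a p : ℂ) (n : ℕ) :
    qPoch (a^2) (p^2) n = qPoch a p n * qPoch (-a) p n := by
  induction n with
  | zero => simp
  | succ n ih => rw [qPoch_succ, qPoch_succ, qPoch_succ, ih]; ring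

lemma qPochInf_sq {p : ℂ} (hp : ‖p‖ < 1) (a : ℂ) :
    qPochInf (a^2) (p^2) = qPochInf a p * qPochInf (-a) p := by
  have h1 := (qPoch_tendsto hp a).mul (qPoch_tendsto hp (-a))
  simp only [← qPoch_sq] at h1
  exact tendsto_nhds_unique (qPoch_tendsto (sq_lt hp) (a^2)) h1

lemma shift {q : ℂ} (h0 : 0 < ‖q‖) (h1 : ‖q‖ < 1) {c : ℂ} (hc : c ≠ 0) (l : ℕ) :
    qPochInf (-(c * q^(-2*(l:ℤ)))) (q^2)
      = q^(-((l:ℤ)^2+l)) * c^l * qPoch (-(q^2/c)) (q^2) l * qPochInf (-c) (q^2) := by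
  have hq : q ≠ 0 := by simpa using h0
  induction l with
  | zero => simp
  | succ l ih =>
    rw [qPochInf_succ (sq_lt h1)]
    have : -(c * q^(-2*((l+1:ℕ):ℤ))) * q^2 = -(c * q^(-2*(l:ℤ))) := by
      rw [neg_mul, mul_assoc, ← zpow_natCast q 2, ← zpow_add₀ hq]
      congr 3; push_cast; ring
    rw [this, ih, qPoch_succ]
    rw [show -(((l+1:ℕ):ℤ)^2+((l+1:ℕ):ℤ)) = -((l:ℤ)^2+l) + -2*((l+1:ℕ):ℤ) by push_cast; ring,
      zpow_add₀ hq]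
    have e : q^(-2*((l+1:ℕ):ℤ)) * (q^2)^(l+1) = 1 := by
      rw [← pow_mul, ← zpow_natCast, ← zpow_add₀ hq]; simp
    generalize q^(-2*((l+1:ℕ):ℤ)) = X at *
    have h2 : (1 - -(c * X)) = X * c * (1 - -(q^2/c) * (q^2)^l) := by
      field_simp
      rw [pow_succ] at e
      linear_combination -e
    rw [h2]
    ring

noncomputable def ff (q : ℂ) (i j k l : ℕ) : ℂ :=
        q ^ ((2*(i:ℤ)^2 + 2*(j:ℤ)^2 + 2*(k:ℤ)^2 + 2*(l:ℤ)^2 - 2*(i:ℤ)*(l:ℤ) - 2*(j:ℤ)*(l:ℤ) - 2*(k:ℤ)*(l:ℤ) + 2*(i:ℤ) - 2*(j:ℤ) + (l:ℤ)) : ℤ) /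
          (qPoch (q ^ 4) (q ^ 4) i * qPoch (q ^ 4) (q ^ 4) j * qPoch (q ^ 4) (q ^ 4) k * qPoch (q ^ 4) (q ^ 4) l)

lemma ff_summable {q : ℂ} (h0 : 0 < ‖q‖) (h1 : ‖q‖ < 1) :
    Summable (fun p : ℕ × ℕ × ℕ × ℕ => ff q p.1 p.2.1 p.2.2.1 p.2.2.2) := by
  have hq : q ≠ 0 := by simpa using h0
  have hp : ‖q^4‖ < 1 := by rw [norm_pow]; exact pow_lt_one₀ (norm_nonneg _) h1 (by norm_num)
  obtain ⟨C, hC, hb⟩ := qPoch_inv_bdd hp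
  have g := (summable_geometric_of_lt_one (norm_nonneg _) h1)
  have g2 := g.mul_of_nonneg g (fun _ => by positivity) (fun _ => by positivity)
  have g3 := g.mul_of_nonneg g2 (fun _ => by positivity) (fun _ => by positivity)
  have g4 := g.mul_of_nonneg g3 (fun _ => by positivity) (fun _ => by positivity)
  refine Summable.of_norm_bounded (g4.mul_left (‖q‖^(-3:ℤ) * (C*C*C*C))) fun ⟨i, j, k, l⟩ => ?_
  simp only [ff]
  rw [div_eq_mul_inv, mul_inv, mul_inv, mul_inv]
  simp only [norm_mul, norm_zpow]
  have e1 : ‖q‖ ^ ((2*(i:ℤ)^2 + 2*(j:ℤ)^2 + 2*(k:ℤ)^2 + 2*(l:ℤ)^2 - 2*(i:ℤ)*(l:ℤ) - 2*(j:ℤ)*(l:ℤ) - 2*(k:ℤ)*(l:ℤ) + 2*(i:ℤ) - 2*(j:ℤ) + (l:ℤ)) : ℤ)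
     ≤ ‖q‖^(-3:ℤ) * (‖q‖^i * (‖q‖^j * (‖q‖^k * ‖q‖^l))) := by
    rw [← pow_add, ← pow_add, ← pow_add, ← zpow_natCast, ← zpow_add₀ h0.ne']
    refine zpow_le_zpow_right_of_le_one₀ h0 h1.le ?_
    push_cast
    nlinarith [sq_nonneg (4*(i:ℤ) - 2*l + 1), sq_nonneg (4*(j:ℤ) - 2*l - 3),
      sq_nonneg (4*(k:ℤ) - 2*l - 1), sq_nonneg (2*(l:ℤ) - 3)]
  calc _ ≤ (‖q‖^(-3:ℤ) * (‖q‖^i * (‖q‖^j * (‖q‖^k * ‖q‖^l)))) * (C * C * C * C) := by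
        gcongr
        · exact hb _
        · exact hb _
        · exact hb _
        · exact hb _
    _ = _ := by ring

lemma ff_inner {q : ℂ} (h0 : 0 < ‖q‖) (h1 : ‖q‖ < 1) (l : ℕ) :
    ∑' x : ℕ × ℕ × ℕ, ff q x.1 x.2.1 x.2.2 l
      = 2 * qPochInf (-q^2) (q^2) * (q^(l^2) * (qPoch (q^2) (q^2) l)⁻¹ *
        qPochInf (-q^(4-2*(l:ℤ))) (q^4)) := by
  have hq : q ≠ 0 := by simpa using h0
  have hw0 : 0 < ‖q^2‖ := by rw [norm_pow]; positivity
  have hw1 := sq_lt h1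
  have hw4 := sq_lt hw1
  rw [← pow_mul] at hw4
  have ht : ∀ i j k : ℕ, ff q i j k l = (q^(2*(l:ℤ)^2+l) * (qPoch (q^4) (q^4) l)⁻¹) *
      (ee (q^2) (q^(4-2*(l:ℤ))) i * (ee (q^2) (q^(-2*(l:ℤ))) j * ee (q^2) (q^(2-2*(l:ℤ))) k)) := by
    intro i j k
    unfold ff ee
    rw [show (q^2)^2 = q^4 by ring]
    rw [div_eq_mul_inv, mul_inv, mul_inv, mul_inv]
    have : q ^ ((2*(i:ℤ)^2 + 2*(j:ℤ)^2 + 2*(k:ℤ)^2 + 2*(l:ℤ)^2 - 2*(i:ℤ)*(l:ℤ) - 2*(j:ℤ)*(l:ℤ) - 2*(k:ℤ)*(l:ℤ) + 2*(i:ℤ) - 2*(j:ℤ) + (l:ℤ)) : ℤ)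
       = q^(2*(l:ℤ)^2+l) * (((q^2)^((i:ℤ)^2-i) * (q^(4-2*(l:ℤ)))^i) *
        (((q^2)^((j:ℤ)^2-j) * (q^(-2*(l:ℤ)))^j) * ((q^2)^((k:ℤ)^2-k) * (q^(2-2*(l:ℤ)))^k))) := by
      simp only [← zpow_natCast, ← zpow_mul, ← zpow_add₀ hq]
      congr 1
      push_cast
      ring
    rw [this]
    ring
  simp only [ht]
  rw [tsum_mul_left]
  have s1 := euler1_summable hw0 hw1 (q^(4-2*(l:ℤ)))
  have s2 := euler1_summable hw0 hw1 (q^(-2*(l:ℤ)))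
  have s3 := euler1_summable hw0 hw1 (q^(2-2*(l:ℤ)))
  have s23 := (summable_mul_of_summable_norm s2 s3).norm
  rw [← tsum_mul_tsum_of_summable_norm s1 s23, ← tsum_mul_tsum_of_summable_norm s2 s3,
    euler1 hw0 hw1, euler1 hw0 hw1, euler1 hw0 hw1]
  have e1 := qPochInf_two hw1 (-q^(-2*(l:ℤ)))
  have e2 : -q^(-2*(l:ℤ)) * q^2 = -q^(2-2*(l:ℤ)) := by
    rw [neg_mul, ← zpow_natCast q 2, ← zpow_add₀ hq]; congr 2; push_cast; ring
  rw [e2] at e1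
  rw [← e1]
  have e3 := shift h0 h1 one_ne_zero l
  rw [one_mul] at e3
  rw [e3, qPochInf_succ hw1 (-1)]
  have e4 := qPoch_sq (q^2) (q^2) l
  rw [show (q^2)^2 = q^4 by ring] at e4 ⊢
  have e5 := qPoch_ne hw4 (q^4) (by simpa using hw4) l
  simp only [show 2*2=4 from rfl] at e5
  rw [e4] at e5 ⊢
  have n1 := left_ne_zero_of_mul e5
  have n2 := right_ne_zero_of_mul e5
  have e6 : q^(l^2) = q^(2*(l:ℤ)^2+l) * q^(-((l:ℤ)^2+l)) := by
    rw [← zpow_natCast, ← zpow_add₀ hq]; congr 1; push_cast; ring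
  rw [e6]
  simp only [div_one, one_pow, mul_one, neg_mul, one_mul, sub_neg_eq_add]
  field_simp
  ring

noncomputable def hh (q : ℂ) (l k : ℕ) : ℂ :=
  q^(l^2) * (qPoch (q^2) (q^2) l)⁻¹ * ee (q^2) (q^(4-2*(l:ℤ))) k

lemma hh_eq {q : ℂ} (hq : q ≠ 0) (l k : ℕ) : hh q l k =
    q^((l:ℤ)^2+2*(k:ℤ)^2+2*k-2*l*k) * (qPoch (q^2) (q^2) l)⁻¹ * (qPoch (q^4) (q^4) k)⁻¹ := by
  unfold hh ee
  rw [show (q^2)^2 = q^4 by ring]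
  have : q^((l:ℤ)^2+2*(k:ℤ)^2+2*k-2*l*k) = q^(l^2) * ((q^2)^((k:ℤ)^2-k) * (q^(4-2*(l:ℤ)))^k) := by
    simp only [← zpow_natCast, ← zpow_mul, ← zpow_add₀ hq]
    congr 1
    push_cast
    ring
  rw [this]; ring

lemma hh_summable {q : ℂ} (h0 : 0 < ‖q‖) (h1 : ‖q‖ < 1) :
    Summable (fun x : ℕ × ℕ => hh q x.1 x.2) := by
  have hq : q ≠ 0 := by simpa using h0
  have hp : ‖q^4‖ < 1 := by rw [norm_pow]; exact pow_lt_one₀ (norm_nonneg _) h1 (by norm_num)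
  obtain ⟨C, hC, hb⟩ := qPoch_inv_bdd hp
  obtain ⟨C', hC', hb'⟩ := qPoch_inv_bdd (sq_lt h1)
  have g := (summable_geometric_of_lt_one (norm_nonneg _) h1)
  have g2 := g.mul_of_nonneg g (fun _ => by positivity) (fun _ => by positivity)
  refine Summable.of_norm_bounded (g2.mul_left (C'*C)) fun ⟨l, k⟩ => ?_
  simp only [hh_eq hq, norm_mul, norm_zpow]
  have e1 : ‖q‖ ^ ((l:ℤ)^2+2*(k:ℤ)^2+2*k-2*l*k) ≤ ‖q‖^l * ‖q‖^k := by
    rw [← pow_add, ← zpow_natCast]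
    refine zpow_le_zpow_right_of_le_one₀ h0 h1.le ?_
    push_cast
    nlinarith [sq_nonneg (2*((l:ℤ) - k) - 1), sq_nonneg (k:ℤ), Int.le_self_sq ((l:ℤ)-k)]
  calc _ ≤ (‖q‖^l * ‖q‖^k) * C' * C := by
        gcongr
        · exact hb' _
        · exact hb _
    _ = _ := by ring

lemma hh_inner {q : ℂ} (h0 : 0 < ‖q‖) (h1 : ‖q‖ < 1) (k : ℕ) :
    ∑' l, hh q l k = qPochInf (-q) (q^2) *
      (q^(k^2+2*k) * qPoch (-q) (q^2) k * (qPoch (q^4) (q^4) k)⁻¹) := by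
  have hq : q ≠ 0 := by simpa using h0
  have ht : ∀ l, hh q l k = q^(2*(k:ℤ)^2+2*k) * (qPoch (q^4) (q^4) k)⁻¹ * ee q (q * q^(-2*(k:ℤ))) l := by
    intro l
    rw [hh_eq hq]
    unfold ee
    have : q^((l:ℤ)^2+2*(k:ℤ)^2+2*k-2*l*k) = q^(2*(k:ℤ)^2+2*k) * (q^((l:ℤ)^2-l) * (q * q^(-2*(k:ℤ)))^l) := by
      rw [← zpow_one_add₀ hq]
      simp only [← zpow_natCast, ← zpow_mul, ← zpow_add₀ hq]
      congr 1
      ring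
    rw [this]; ring
  simp only [ht]
  rw [tsum_mul_left, euler1 h0 h1, shift h0 h1 hq]
  rw [show q^2/q = q by field_simp]
  have : q^(k^2+2*k) = q^(2*(k:ℤ)^2+2*k) * (q^(-((k:ℤ)^2+k)) * q^k) := by
    simp only [← zpow_natCast, ← zpow_mul, ← zpow_add₀ hq]
    congr 1
    push_cast
    ring
  rw [this]; ring

lemma ff_total {q : ℂ} (h0 : 0 < ‖q‖) (h1 : ‖q‖ < 1) :
    ∑' p : ℕ × ℕ × ℕ × ℕ, ff q p.1 p.2.1 p.2.2.1 p.2.2.2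
      = 2 * qPochInf (-q^2) (q^2) * (qPochInf (-q) (q^2) * qPochInf (-q) (q^2) *
        (qPochInf (q^2) (q^2))⁻¹) * ∑' n : ℤ, (-1)^n * q^(3*n^2+2*n) := by
  have hw0 : 0 < ‖q^2‖ := by rw [norm_pow]; positivity
  have hw1 := sq_lt h1
  let e : ℕ × (ℕ × ℕ × ℕ) ≃ ℕ × ℕ × ℕ × ℕ :=
    { toFun := fun x => (x.2.1, x.2.2.1, x.2.2.2, x.1)
      invFun := fun x => (x.2.2.2, x.1, x.2.1, x.2.2.1)
      left_inv := fun x => rfl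
      right_inv := fun x => rfl }
  have hs := e.summable_iff.mpr (ff_summable h0 h1)
  rw [← e.tsum_eq]
  refine (hs.tsum_prod).trans ?_
  have : ∀ l : ℕ, ∑' x : ℕ × ℕ × ℕ, ((fun p : ℕ × ℕ × ℕ × ℕ => ff q p.1 p.2.1 p.2.2.1 p.2.2.2) ∘ e) (l, x)
     = 2 * qPochInf (-q^2) (q^2) * ∑' k, hh q l k := by
    intro l
    refine (ff_inner h0 h1 l).trans ?_
    unfold hh
    rw [tsum_mul_left, euler1 hw0 hw1, show (q^2)^2 = q^4 by ring]
  simp only [this]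
  rw [tsum_mul_left, ← Summable.tsum_comm (f := fun l k => hh q l k) (hh_summable h0 h1)]
  simp only [hh_inner h0 h1]
  rw [tsum_mul_left, bailey h0 h1]
  ring


lemma split2 {f : ℤ × ℤ → ℂ} (hf : Summable f) :
    ∑' x, f x = ∑' x : ℤ × ℤ, f (2*x.1, x.2) + ∑' x : ℤ × ℤ, f (2*x.1+1, x.2) := by
  have i1 : Function.Injective (fun x : ℤ × ℤ => (2*x.1, x.2)) := by
    rintro ⟨a, b⟩ ⟨c, d⟩ h
    simp at h
    simp [h]
  have i2 : Function.Injective (fun x : ℤ × ℤ => (2*x.1+1, x.2)) := by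
    rintro ⟨a, b⟩ ⟨c, d⟩ h
    simp at h
    simp [h]
  have hc : IsCompl (Set.range (fun x : ℤ × ℤ => (2*x.1, x.2)))
      (Set.range (fun x : ℤ × ℤ => (2*x.1+1, x.2))) := by
    constructor
    · rw [Set.disjoint_iff]
      rintro _ ⟨⟨⟨a, b⟩, rfl⟩, ⟨c, d⟩, h⟩
      simp at h
      omega
    · rw [codisjoint_iff]
      ext ⟨a, b⟩
      simp only [Set.sup_eq_union, Set.mem_union, Set.mem_range, Prod.exists, Prod.mk.injEq,
        Set.top_eq_univ, Set.mem_univ, iff_true]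
      rcases Int.even_or_odd' a with ⟨c, h | h⟩
      · exact Or.inl ⟨c, b, h.symm, rfl⟩
      · exact Or.inr ⟨c, b, h.symm, rfl⟩
  have h1 := i1.hasSum_range_iff.mpr (hf.comp_injective i1).hasSum
  have h2 := i2.hasSum_range_iff.mpr (hf.comp_injective i2).hasSum
  exact (HasSum.add_isCompl hc h1 h2).tsum_eq

/-- theta series -/
noncomputable def th (q : ℂ) (a b : ℤ) (n : ℤ) : ℂ := (-1)^n * q^(a*n^2+b*n)

lemma th_eq' {q : ℂ} (hq : q ≠ 0) (a b : ℕ) (n : ℤ) :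
    th q a b n = (q^a)^(n^2-n) * (-q^(a+b))^n := by
  unfold th
  rw [neg_eq_neg_one_mul (q^(a+b)), mul_zpow]
  simp only [← zpow_natCast, ← zpow_mul]
  rw [mul_left_comm, ← zpow_add₀ hq]
  congr 2
  push_cast; ring

lemma th_summable {q : ℂ} (h0 : 0 < ‖q‖) (h1 : ‖q‖ < 1) (a b : ℕ) (ha : a ≠ 0) :
    Summable (fun n => ‖th q a b n‖) := by
  have hq : q ≠ 0 := by simpa using h0
  simp only [th_eq' hq]
  exact summ_sqZ (by rw [norm_pow]; positivity)
    (by rw [norm_pow]; exact pow_lt_one₀ (norm_nonneg _) h1 ha) (neg_ne_zero.mpr (pow_ne_zero _ hq))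

lemma th_jtp {q : ℂ} (h0 : 0 < ‖q‖) (h1 : ‖q‖ < 1) (a b c m : ℕ) (hm : m = 2*a) (hc : c + b = a)
    (hc0 : 0 < c) :
    ∑' n, th q a b n = qPochInf (q^c) (q^m) * qPochInf (q^(m-c)) (q^m) * qPochInf (q^m) (q^m) := by
  have hq : q ≠ 0 := by simpa using h0
  subst hm
  simp only [th_eq' hq]
  rw [jtp (by rw [norm_pow]; positivity)
    (by rw [norm_pow]; exact pow_lt_one₀ (norm_nonneg _) h1 (by omega)) (pow_ne_zero _ hq)]
  · have e1 : (q^a)^2 / q^(a+b) = q^c := by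
      rw [div_eq_iff (pow_ne_zero _ hq)]; subst hc; ring
    rw [e1, show (q^a)^2 = q^(2*a) by ring, show 2*a-c = a+b by omega]
    ring
  · rw [← pow_mul, norm_pow, norm_pow]
    exact pow_lt_pow_right_of_lt_one₀ h0 h1 (by omega)

lemma th_mul {q : ℂ} (h0 : 0 < ‖q‖) (h1 : ‖q‖ < 1) (a b c d : ℕ) (ha : a ≠ 0) (hc : c ≠ 0) :
    (∑' n, th q a b n) * (∑' n, th q c d n) = ∑' x : ℤ × ℤ, th q a b x.1 * th q c d x.2 :=
  tsum_mul_tsum_of_summable_norm (th_summable h0 h1 a b ha) (th_summable h0 h1 c d hc)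

lemma neg1_zpow_congr {a b : ℤ} (h : ∃ c, a = b + 2 * c) : (-1:ℂ)^a = (-1)^b := by
  obtain ⟨c, rfl⟩ := h
  rw [zpow_add₀ (by norm_num), zpow_mul]; simp

lemma neg1_succ (b : ℤ) : (-1:ℂ)^(1+b) = -(-1)^b := by
  rw [zpow_one_add₀ (by norm_num)]; ring

lemma th_prod {q : ℂ} (hq : q ≠ 0) (a b c d m n : ℤ) :
    th q a b m * th q c d n = (-1)^(m+n) * q^(a*m^2+b*m+(c*n^2+d*n)) := by
  unfold th
  rw [zpow_add₀ (by norm_num : (-1:ℂ) ≠ 0), zpow_add₀ hq (a*m^2+b*m)]; ring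

/-- the full double series -/
noncomputable def TT (q : ℂ) (x : ℤ × ℤ) : ℂ := (-1)^x.2 * q^(x.1^2 + 3*x.2^2+2*x.2)

noncomputable def WW (q : ℂ) (n s : ℤ) : ℂ := q^(4*(n^2+n*s+s^2+n+s))

noncomputable def GG (q : ℂ) (x : ℤ × ℤ) : ℂ := (-1)^x.2 * q^(4*x.2^2+4*x.2*x.1+4*x.1^2+2*x.2)

def sh : ℤ × ℤ ≃ ℤ × ℤ where
  toFun x := (x.1 + x.2, x.2)
  invFun x := (x.1 - x.2, x.2)
  left_inv x := by simp
  right_inv x := by simp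

lemma phi_jtp {q : ℂ} (h0 : 0 < ‖q‖) (h1 : ‖q‖ < 1) :
    ∑' n : ℤ, q^(n^2) = qPochInf (-q) (q^2) * qPochInf (-q) (q^2) * qPochInf (q^2) (q^2) := by
  have hq : q ≠ 0 := by simpa using h0
  have := jtp h0 h1 (z := -q) (by simpa using hq) (by rw [norm_neg, norm_pow]; nlinarith)
  rw [show q^2 / -q = -q by field_simp] at this
  rw [← this]
  refine tsum_congr fun n => ?_
  rw [neg_neg, ← zpow_add₀ hq]; congr 1; ring

lemma phi_summable {q : ℂ} (h0 : 0 < ‖q‖) (h1 : ‖q‖ < 1) : Summable (fun n : ℤ => ‖q^(n^2)‖) := by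
  have hq : q ≠ 0 := by simpa using h0
  refine (summ_sqZ h0 h1 hq).congr fun n => ?_
  rw [← zpow_add₀ hq]; congr 2; ring

lemma TT_summable {q : ℂ} (h0 : 0 < ‖q‖) (h1 : ‖q‖ < 1) : Summable (TT q) := by
  have hq : q ≠ 0 := by simpa using h0
  refine (summable_mul_of_summable_norm (phi_summable h0 h1)
    (th_summable h0 h1 3 2 (by norm_num))).congr fun x => ?_
  unfold TT th
  rw [mul_left_comm, ← zpow_add₀ hq]; congr 2; push_cast; ring

lemma TT_tsum {q : ℂ} (h0 : 0 < ‖q‖) (h1 : ‖q‖ < 1) :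
    (∑' n : ℤ, q^(n^2)) * (∑' n, th q 3 2 n) = ∑' x, TT q x := by
  have hq : q ≠ 0 := by simpa using h0
  have := tsum_mul_tsum_of_summable_norm (phi_summable h0 h1)
    (th_summable h0 h1 3 2 (by norm_num))
  refine this.trans (tsum_congr fun x => ?_)
  unfold TT th
  rw [mul_left_comm, ← zpow_add₀ hq]; congr 2; push_cast; ring

lemma TT_split {q : ℂ} (h0 : 0 < ‖q‖) (h1 : ‖q‖ < 1) :
    ∑' x, TT q x = ∑' x, GG q x + q * ∑' x : ℤ × ℤ, (-1)^x.2 * WW q x.1 x.2 := by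
  have hq : q ≠ 0 := by simpa using h0
  have hs := sh.summable_iff.mpr (TT_summable h0 h1)
  rw [← sh.tsum_eq]
  refine (split2 hs).trans ?_
  rw [← tsum_mul_left]
  congr 1
  · refine tsum_congr fun x => ?_
    simp only [TT, GG, sh, Function.comp, Equiv.coe_fn_mk]
    congr 2; ring
  · refine tsum_congr fun x => ?_
    simp only [TT, WW, sh, Function.comp, Equiv.coe_fn_mk]
    rw [mul_left_comm, ← zpow_one_add₀ hq]
    congr 2; ring

lemma GG_summable {q : ℂ} (h0 : 0 < ‖q‖) (h1 : ‖q‖ < 1) : Summable (GG q) := by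
  have hs := (sh.summable_iff.mpr (TT_summable h0 h1)).comp_injective
    (i := fun x : ℤ × ℤ => (2*x.1, x.2)) (by
      rintro ⟨a, b⟩ ⟨c, d⟩ h
      simp at h
      simp [h])
  refine hs.congr fun x => ?_
  simp only [TT, GG, sh, Function.comp, Equiv.coe_fn_mk]
  congr 2; ring

lemma WW_summable {q : ℂ} (h0 : 0 < ‖q‖) (h1 : ‖q‖ < 1) :
    Summable (fun x : ℤ × ℤ => WW q x.1 x.2) := by
  have hq : q ≠ 0 := by simpa using h0
  have hs := ((sh.summable_iff.mpr (TT_summable h0 h1)).comp_injective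
    (i := fun x : ℤ × ℤ => (2*x.1+1, x.2)) (by
      rintro ⟨a, b⟩ ⟨c, d⟩ h
      simp at h
      simp [h])).mul_left q⁻¹
  refine Summable.of_norm (hs.norm.congr fun x => ?_)
  simp only [TT, WW, sh, Function.comp, Equiv.coe_fn_mk]
  rw [mul_left_comm, ← zpow_neg_one, ← zpow_add₀ hq, norm_mul, norm_zpow (-1:ℂ)]
  simp only [norm_neg, norm_one, one_zpow, one_mul]
  congr 2; ring

lemma GG_tsum {q : ℂ} (h0 : 0 < ‖q‖) (h1 : ‖q‖ < 1) :
    ∑' x, GG q x = (∑' n, th q 4 2 n) * (∑' n, th q 12 2 n - q^2 * ∑' n, th q 12 10 n) := by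
  have hq : q ≠ 0 := by simpa using h0
  rw [split2 (GG_summable h0 h1), mul_sub, mul_left_comm]
  have m1 := th_mul h0 h1 4 2 12 2 (by norm_num) (by norm_num)
  have m2 := th_mul h0 h1 4 2 12 10 (by norm_num) (by norm_num)
  push_cast at m1 m2
  rw [m1, m2, sub_eq_add_neg, ← neg_mul, ← tsum_mul_left]
  let e1 : ℤ × ℤ ≃ ℤ × ℤ :=
    { toFun := fun x => (-x.2, x.1 + x.2)
      invFun := fun x => (x.2 + x.1, -x.1)
      left_inv := fun x => by simp
      right_inv := fun x => by simp }
  let e2 : ℤ × ℤ ≃ ℤ × ℤ :=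
    { toFun := fun x => (x.2, -x.1 - 1 - x.2)
      invFun := fun x => (-x.2 - 1 - x.1, x.1)
      left_inv := fun x => by ext <;> dsimp only <;> ring
      right_inv := fun x => by ext <;> dsimp only <;> ring }
  congr 1
  · rw [← e1.tsum_eq]
    refine tsum_congr fun x => ?_
    simp only [th_prod hq, GG, e1, Equiv.coe_fn_mk]
    congr 2 <;> ring
  · rw [← e2.tsum_eq]
    refine tsum_congr fun x => ?_
    simp only [th_prod hq, GG, e2, Equiv.coe_fn_mk]
    have k1 : (-1:ℂ)^(-x.1-1-x.2) = -(-1)^(x.1+x.2) := by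
      rw [← neg1_succ]; exact neg1_zpow_congr ⟨-x.1-x.2-1, by ring⟩
    rw [k1, neg_mul, neg_mul, mul_left_comm, ← zpow_natCast q 2, ← zpow_add₀ hq]
    congr 3; push_cast; ring

lemma WW_tsum {q : ℂ} (h0 : 0 < ‖q‖) (h1 : ‖q‖ < 1) :
    ∑' x : ℤ × ℤ, (-1)^x.2 * WW q x.1 x.2 = (∑' n, th q 4 0 n) * (∑' n, th q 12 8 n) := by
  have hq : q ≠ 0 := by simpa using h0
  have hW := WW_summable h0 h1
  have s2 : Summable (fun x : ℤ × ℤ => (-1)^x.2 * WW q x.1 x.2) := by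
    refine Summable.of_norm (hW.norm.congr fun x => ?_)
    rw [norm_mul, norm_zpow]; simp
  have s3 : Summable (fun x : ℤ × ℤ => (-1)^(x.1+x.2) * WW q x.1 x.2) := by
    refine Summable.of_norm (hW.norm.congr fun x => ?_)
    rw [norm_mul, norm_zpow]; simp
  let e3 : ℤ × ℤ ≃ ℤ × ℤ :=
    { toFun := fun x => (x.1, -1 - x.1 - x.2)
      invFun := fun x => (x.1, -1 - x.1 - x.2)
      left_inv := fun x => by simp
      right_inv := fun x => by simp }
  have h3 : ∑' x : ℤ × ℤ, (-1)^(x.1+x.2) * WW q x.1 x.2 = - ∑' x : ℤ × ℤ, (-1)^x.2 * WW q x.1 x.2 := by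
    rw [← e3.tsum_eq, ← tsum_neg]
    refine tsum_congr fun x => ?_
    simp only [WW, e3, Equiv.coe_fn_mk]
    rw [← neg_one_mul ((-1)^x.2 * _), ← mul_assoc, ← zpow_one_add₀ (by norm_num : (-1:ℂ) ≠ 0)]
    congr 1
    · exact neg1_zpow_congr ⟨-x.2-1, by ring⟩
    · congr 1; ring
  have a2 := split2 s2
  have a3 := split2 s3
  rw [h3] at a3
  have b1 : ∀ x : ℤ × ℤ, (-1:ℂ)^(2*x.1+x.2) = (-1)^x.2 := fun x => neg1_zpow_congr ⟨x.1, by ring⟩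
  have b2 : ∀ x : ℤ × ℤ, (-1:ℂ)^(2*x.1+1+x.2) = -(-1)^x.2 := fun x => by
    rw [← neg1_succ]; exact neg1_zpow_congr ⟨x.1, by ring⟩
  simp only [b1, b2, neg_mul, tsum_neg] at a3
  have hA : ∑' x : ℤ × ℤ, (-1)^x.2 * WW q x.1 x.2 = ∑' x : ℤ × ℤ, (-1)^x.2 * WW q (2*x.1+1) x.2 := by
    linear_combination (a2 - a3) / 2
  rw [hA]
  have m1 := th_mul h0 h1 4 0 12 8 (by norm_num) (by norm_num)
  push_cast at m1
  rw [m1]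
  let e4 : ℤ × ℤ ≃ ℤ × ℤ :=
    { toFun := fun x => (-x.2-1, x.1 + x.2)
      invFun := fun x => (x.2 + x.1 + 1, -x.1-1)
      left_inv := fun x => by ext <;> dsimp only <;> ring
      right_inv := fun x => by ext <;> dsimp only <;> ring }
  rw [← e4.tsum_eq]
  refine tsum_congr fun x => ?_
  simp only [th_prod hq, WW, e4, Equiv.coe_fn_mk]
  congr 2; ring


lemma fin_alg {q A B E P w u1 u2 v X Θ T10 T4 T2 : ℂ} (hA : A ≠ 0) (hE : E ≠ 0)
    (r1 : B = A * P) (r2 : A = w * B) (r3 : w = u1 * u2) (r4 : B = v * E)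
    (hT : X * X * A * Θ = u1 * u2 * E * (T10 - q^2 * T2) + q * (v * v * E * T4)) :
    2 * P * (X * X * A⁻¹) * Θ = 2 * E * T10 / A^2 + 2 * q * B^3 * T4 / (A^3 * E)
      - 2 * q^2 * E * T2 / A^2 := by
  have key : 2 * P * X * X * Θ * A^2 * E
      = 2 * A * E^2 * (T10 - q^2 * T2) + 2 * q * B^3 * T4 := by
    have k1 : u1 * u2 * B = A := by rw [← r3, ← r2]
    have k2 : 2 * P * X * X * Θ * A^2 * E = 2 * B * E * (X * X * A * Θ) := by rw [r1]; ring
    have k3 : B^3 = B * (v * E)^2 := by rw [← r4]; ring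
    rw [k2, hT, k3]
    linear_combination (2 * E^2 * (T10 - q^2 * T2)) * k1
  have : 2 * P * (X * X * A⁻¹) * Θ = (2 * P * X * X * Θ * A^2 * E) / (A^3 * E) := by
    field_simp
  rw [this, key]
  field_simp
  ring

theorem stmt_2 (q : ℂ) (h0 : 0 < ‖q‖) (h1 : ‖q‖ < 1) :
    (∑' p : ℕ × ℕ × ℕ × ℕ,
      (fun (i j k l : ℕ) =>
        q ^ ((2*(i:ℤ)^2 + 2*(j:ℤ)^2 + 2*(k:ℤ)^2 + 2*(l:ℤ)^2 - 2*(i:ℤ)*(l:ℤ) - 2*(j:ℤ)*(l:ℤ) - 2*(k:ℤ)*(l:ℤ) + 2*(i:ℤ) - 2*(j:ℤ) + (l:ℤ)) : ℤ) /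
          (qPoch (q ^ 4) (q ^ 4) i * qPoch (q ^ 4) (q ^ 4) j * qPoch (q ^ 4) (q ^ 4) k * qPoch (q ^ 4) (q ^ 4) l))
        p.1 p.2.1 p.2.2.1 p.2.2.2)
    = 2 * J q 8 * Jam q 10 24 / (J q 2)^2
      + 2 * q * (J q 4)^3 * Jam q 4 24 / ((J q 2)^3 * J q 8)
      - 2 * q^2 * J q 8 * Jam q 2 24 / (J q 2)^2 := by
  have hq : q ≠ 0 := by simpa using h0
  refine (ff_total h0 h1).trans ?_
  have hp : ∀ m : ℕ, m ≠ 0 → ‖q^m‖ < 1 := fun m hm => by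
    rw [norm_pow]; exact pow_lt_one₀ (norm_nonneg _) h1 hm
  have t10 := th_jtp h0 h1 12 2 10 24 rfl rfl (by norm_num)
  have t2 := th_jtp h0 h1 12 10 2 24 rfl rfl (by norm_num)
  have t4 := th_jtp h0 h1 12 8 4 24 rfl rfl (by norm_num)
  have tps := th_jtp h0 h1 4 2 2 8 rfl rfl (by norm_num)
  have tph := th_jtp h0 h1 4 0 4 8 rfl rfl (by norm_num)
  have hT := (TT_tsum h0 h1).trans (TT_split h0 h1)
  rw [GG_tsum h0 h1, WW_tsum h0 h1, phi_jtp h0 h1] at hT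
  simp only [Nat.cast_ofNat, Nat.cast_zero, Nat.reduceSub] at t10 t2 t4 tps tph
  rw [t10, t2, t4, tps, tph] at hT
  have hJ2 : J q 2 ≠ 0 := qPochInf_ne' (hp 2 (by norm_num)) _ (hp 2 (by norm_num))
  have hJ8 : J q 8 ≠ 0 := qPochInf_ne' (hp 8 (by norm_num)) _ (hp 8 (by norm_num))
  have r1 := qPochInf_sq (hp 2 (by norm_num)) (q^2)
  have r2 := qPochInf_two (hp 2 (by norm_num)) (q^2)
  have r3 := qPochInf_two (hp 4 (by norm_num)) (q^2)
  have r4 := qPochInf_two (hp 4 (by norm_num)) (q^4)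
  simp only [← pow_mul, ← pow_add, Nat.reduceMul, Nat.reduceAdd] at r1 r2 r3 r4
  have hΘ : ∑' n : ℤ, (-1:ℂ)^n * q^(3*n^2+2*n) = ∑' n, th q 3 2 n := rfl
  rw [hΘ]
  unfold Jam
  unfold J at *
  simp only [Nat.reduceSub]
  generalize ∑' n, th q 3 2 n = Θ at *
  exact fin_alg hJ2 hJ8 r1 r2 r3 r4 hT
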